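/- Parabolic covering lemma: Let n be a positive integer, let μ₀ ∈ (0,1) be a fixed constant, and let Γ ⊂ ℝ^{n+1} be a Lebesgue measurable set with finite (n+1)-dimensional Lebesgue measure |Γ|. Define the family of standard parabolic cylinders 𝒜 := {Q_r(Y) : Y ∈ ℝ^{n+1}, r > 0, |Q_r(Y) ∩ Γ| ≥ (1−μ₀)·|Q_r(Y)|} and the open set E := ⋃_{Q ∈ 𝒜} Q. Then |Γ \ E| = 0 and |E| ≥ q₀·|Γ|, where q₀ := 1 + 3^{−n−1}·μ₀ > 1. -/

import Mathlib

open MeasureTheory ENNReal Metric Set RealInnerProductSpace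

noncomputable section

/-- `n`-dimensional Euclidean space. -/
abbrev En (n : ℕ) : Type := EuclideanSpace ℝ (Fin n)

variable {n : ℕ}

/-- Time derivative `u_t`. -/
def Dt (u : En n × ℝ → ℝ) (X : En n × ℝ) : ℝ :=
  deriv (fun t => u (X.1, t)) X.2

/-- First spatial derivative `D_i u`. -/
def Dx (u : En n × ℝ → ℝ) (i : Fin n) (X : En n × ℝ) : ℝ :=
  fderiv ℝ (fun x => u (x, X.2)) X.1 (EuclideanSpace.single i 1)

/-- Second spatial derivative `D_{ij} u`. -/
def Dxx (u : En n × ℝ → ℝ) (i j : Fin n) (X : En n × ℝ) : ℝ :=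
  Dx (Dx u j) i X

/-- `u` is of class `C^{2,1}` on `Q`: `u`, `D_i u`, `D_{ij} u`, `u_t` exist and are
continuous on `Q`. -/
structure IsC21 (u : En n × ℝ → ℝ) (Q : Set (En n × ℝ)) : Prop where
  cont : ContinuousOn u Q
  diff_t : ∀ X ∈ Q, DifferentiableAt ℝ (fun t => u (X.1, t)) X.2
  diff_x : ∀ X ∈ Q, DifferentiableAt ℝ (fun x => u (x, X.2)) X.1
  diff_xx : ∀ j : Fin n, ∀ X ∈ Q, DifferentiableAt ℝ (fun x => Dx u j (x, X.2)) X.1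
  cont_t : ContinuousOn (Dt u) Q
  cont_x : ∀ i, ContinuousOn (Dx u i) Q
  cont_xx : ∀ i j, ContinuousOn (Dxx u i j) Q

/-- Uniform parabolicity with constant `ν` on `Q`:
`ν⁻¹|ξ|² ≤ Σ a_ij ξ_i ξ_j` and `Σ a_ij² ≤ ν²`. -/
def UnifParabolic (ν : ℝ) (a : En n × ℝ → Matrix (Fin n) (Fin n) ℝ)
    (Q : Set (En n × ℝ)) : Prop :=
  ∀ X ∈ Q, (∀ ξ : Fin n → ℝ, ν⁻¹ * (∑ i, ξ i ^ 2) ≤ ∑ i, ∑ j, a X i j * ξ i * ξ j) ∧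
    (∑ i, ∑ j, (a X i j) ^ 2) ≤ ν ^ 2

/-- `Lu = Σ_{ij} a_ij D_ij u + Σ_i b_i D_i u`. -/
def Lop (a : En n × ℝ → Matrix (Fin n) (Fin n) ℝ) (b : En n × ℝ → En n)
    (u : En n × ℝ → ℝ) (X : En n × ℝ) : ℝ :=
  (∑ i, ∑ j, a X i j * Dxx u i j X) + ∑ i, b X i * Dx u i X

/-- `∫ (ess sup_t |f(x,t)|)ⁿ dx`, the `n`-th power of the `L^n_x L^∞_t` norm of `f`
over the set `Q ⊆ ℝⁿ × ℝ`. -/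
def LxnLtinfPow {E : Type*} [NNNorm E] (f : En n × ℝ → E) (Q : Set (En n × ℝ)) : ℝ≥0∞ :=
  ∫⁻ x, (essSup (fun t => (‖f (x, t)‖₊ : ℝ≥0∞)) (volume.restrict {t | (x, t) ∈ Q})) ^ n

/-- The `L^n_x L^∞_t` norm of `f` over `Q`. -/
def LxnLtinf {E : Type*} [NNNorm E] (f : En n × ℝ → E) (Q : Set (En n × ℝ)) : ℝ≥0∞ :=
  (LxnLtinfPow f Q) ^ (1 / (n : ℝ))

/-- The box `B_ρ(y) × (t₁, t₂)`. -/
def box (y : En n) (ρ t₁ t₂ : ℝ) : Set (En n × ℝ) := ball y ρ ×ˢ Ioo t₁ t₂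

/-- The standard parabolic cylinder `Q_r(Y) = B_r(y) × (s - r², s)`. -/
def pcyl (Y : En n × ℝ) (r : ℝ) : Set (En n × ℝ) := box Y.1 r (Y.2 - r ^ 2) Y.2

/-- The slanted cylinder `V_r(Y) = {(x,t) : |x - (t/s)y| < r, 0 < t < s}`. -/
def slantCyl (Y : En n × ℝ) (r : ℝ) : Set (En n × ℝ) :=
  {X | ‖X.1 - (X.2 / Y.2) • Y.1‖ < r ∧ 0 < X.2 ∧ X.2 < Y.2}

/-- Supremum of the positive part `u₊` over a set `A`. -/
def supPos (u : En n × ℝ → ℝ) (A : Set (En n × ℝ)) : ℝ :=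
  sSup ((fun X => max (u X) 0) '' A)

/-- `Ω` is a Lipschitz domain with character `(rΩ, mΩ)`: at every boundary point `y`
there is a coordinate frame, encoded by the unit "vertical" direction `e`, in which
`Ω ∩ B_{rΩ}(y)` is the region above the graph of an `mΩ`-Lipschitz function `φ`
of the tangential variables. -/
def IsLipschitzDomain (Ω : Set (En n)) (rΩ mΩ : ℝ) : Prop :=
  0 < rΩ ∧ 0 ≤ mΩ ∧
  ∀ y ∈ frontier Ω, ∃ (e : En n) (φ : En n → ℝ),
    ‖e‖ = 1 ∧ LipschitzWith (Real.toNNReal mΩ) φ ∧ φ 0 = 0 ∧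
    (∀ x, x ∈ Ω ∩ ball y rΩ ↔
      dist x y < rΩ ∧ φ ((x - y) - ⟪x - y, e⟫ • e) < ⟪x - y, e⟫) ∧
    (∀ ρ : ℝ, 0 < ρ → ρ ≤ rΩ → y + ρ • e ∈ Ω)

/-- The union of all standard parabolic cylinders in which `Γ` has relative
measure at least `1 - μ₀`. -/
def coverUnion (n : ℕ) (μ₀ : ℝ) (Γ : Set (En n × ℝ)) : Set (En n × ℝ) :=
  ⋃ (Y : En n × ℝ) (r : ℝ)
    (_ : 0 < r ∧ ENNReal.ofReal (1 - μ₀) * volume (pcyl Y r) ≤ volume (pcyl Y r ∩ Γ)),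
    pcyl Y r

/-!
A small ball is, up to a null set, a finite stack of parabolic cylinders of equal radius. The part
of `Γ` outside `E` has density at most `1 - μ₀` in every cylinder, hence in every such ball, so it
has no density points and is null.

For the measure estimate we may assume `|E| < ∞`, which bounds the radii of the cylinders in `𝒜`.
Increasing the radius of a cylinder in `𝒜` continuously, we reach one in which `Γ` has relative
measure exactly `1 - μ₀`, and these critical cylinders still cover `E`. By the Vitali covering
lemma, disjoint critical cylinders `Q` cover `E` after an enlargement of the ball by the factor
`1 + 2τ` and of the time interval by `1 + 2τ²`, for any `τ > 1`. As `|Q \ Γ| = μ₀ |Q|`, letting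
`τ → 1` gives `μ₀ |E| ≤ 3ⁿ⁺¹ |E \ Γ|`, and `|E| = |Γ| + |E \ Γ|` when `Γ` is measurable. In general
`Γ` is replaced by a measurable hull, which leaves `E` and `|Γ|` unchanged.
-/

open Filter Topology

theorem measure_eq_zero_of_frequently_inter_closedBall_le {α : Type*} [MetricSpace α]
    [SecondCountableTopology α] [HasBesicovitchCovering α] [MeasurableSpace α] [BorelSpace α]
    {μ : Measure α} [IsLocallyFiniteMeasure μ] {s : Set α} {c : ℝ≥0∞} (hc : c < 1)
    (h : ∀ᵐ x ∂μ.restrict s,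
      ∃ᶠ r in 𝓝[>] (0 : ℝ), μ (s ∩ closedBall x r) ≤ c * μ (closedBall x r)) :
    μ s = 0 := by
  rw [← Measure.restrict_eq_zero, ← ae_eq_bot, ← eventually_false_iff_eq_bot]
  filter_upwards [h, Besicovitch.ae_tendsto_measure_inter_div μ s] with x hx hdensity
  obtain ⟨r, hle, hlt⟩ := (hx.and_eventually (hdensity.eventually_const_lt hc)).exists
  exact hlt.not_ge (ENNReal.div_le_of_le_mul hle)

theorem closedBall_ae_eq_ball {E : Type*} [NormedAddCommGroup E] [NormedSpace ℝ E]
    [FiniteDimensional ℝ E] [Nontrivial E] [MeasurableSpace E] [BorelSpace E] (μ : Measure E)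
    [μ.IsAddHaarMeasure] (x : E) (r : ℝ) : closedBall x r =ᵐ[μ] ball x r :=
  (ae_eq_of_subset_of_measure_ge ball_subset_closedBall
    (Measure.addHaar_closedBall_eq_addHaar_ball μ x r).le
    measurableSet_ball.nullMeasurableSet measure_closedBall_lt_top.ne).symm

theorem continuous_measure_inter_of_monotone {ι α : Type*} [LinearOrder ι] [TopologicalSpace ι]
    [MeasurableSpace α] {μ : Measure α} {S : ι → Set α} (hmono : Monotone S)
    (hmeas : ∀ i, MeasurableSet (S i)) (hfin : ∀ i, μ (S i) ≠ ⊤)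
    (hcont : Continuous fun i => μ (S i)) (A : Set α) :
    Continuous fun i => μ (S i ∩ A) := by
  have hfinA (i : ι) : μ (S i ∩ A) ≠ ⊤ := measure_ne_top_of_subset inter_subset_left (hfin i)
  have hrestrict (i : ι) : (μ.restrict A).real (S i) = μ.real (S i ∩ A) := by
    rw [measureReal_restrict_apply (hmeas i)]
  have hdist_of_le {i j : ι} (hij : i ≤ j) :
      dist (μ.real (S j ∩ A)) (μ.real (S i ∩ A)) ≤ dist (μ.real (S j)) (μ.real (S i)) := by
    have hsdiff : μ.real (S j) - μ.real (S i) = μ.real (S j \ S i) :=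
      (measureReal_sdiff (hmono hij) (hmeas i) (hfin j)).symm
    have hsdiffA : μ.real (S j ∩ A) - μ.real (S i ∩ A) = (μ.restrict A).real (S j \ S i) := by
      rw [← hrestrict, ← hrestrict]
      exact (measureReal_sdiff (hmono hij) (hmeas i)
        (ne_top_of_le_ne_top (hfin j) (Measure.restrict_apply_le A _))).symm
    rw [Real.dist_eq, Real.dist_eq, hsdiff, hsdiffA, abs_of_nonneg measureReal_nonneg,
      abs_of_nonneg measureReal_nonneg]
    exact ENNReal.toReal_mono (measure_ne_top_of_subset sdiff_subset (hfin j))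
      (Measure.restrict_apply_le A _)
  have hdist (i j : ι) :
      dist (μ.real (S j ∩ A)) (μ.real (S i ∩ A)) ≤ dist (μ.real (S j)) (μ.real (S i)) := by
    rcases le_total i j with hij | hji
    · exact hdist_of_le hij
    · simpa only [dist_comm] using hdist_of_le hji
  have hreal : Continuous fun i => μ.real (S i ∩ A) := by
    have hV : Continuous fun i => μ.real (S i) :=
      continuous_iff_continuousAt.2 fun i =>
        (ENNReal.tendsto_toReal (hfin i)).comp hcont.continuousAt
    refine continuous_iff_continuousAt.2 fun i => tendsto_iff_dist_tendsto_zero.2 ?_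
    exact squeeze_zero (fun _ => dist_nonneg) (hdist i)
      (tendsto_iff_dist_tendsto_zero.1 (hV.tendsto i))
  simpa only [Function.comp_def, ofReal_measureReal (hfinA _)] using
    ENNReal.continuous_ofReal.comp hreal

theorem isOpen_pcyl (Y : En n × ℝ) (r : ℝ) : IsOpen (pcyl Y r) :=
  isOpen_ball.prod isOpen_Ioo

theorem measurableSet_pcyl (Y : En n × ℝ) (r : ℝ) : MeasurableSet (pcyl Y r) :=
  (isOpen_pcyl Y r).measurableSet

theorem pcyl_nonempty (Y : En n × ℝ) {r : ℝ} (hr : 0 < r) : (pcyl Y r).Nonempty :=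
  (nonempty_ball.2 hr).prod (nonempty_Ioo.2 (sub_lt_self _ (pow_pos hr 2)))

theorem pcyl_eq_empty_of_nonpos (Y : En n × ℝ) {r : ℝ} (hr : r ≤ 0) : pcyl Y r = ∅ := by
  rw [pcyl, box, ball_eq_empty.2 hr, empty_prod]

theorem monotone_pcyl (Y : En n × ℝ) : Monotone (pcyl Y) := by
  intro r R hrR
  rcases le_or_gt r 0 with hr | hr
  · simp only [pcyl_eq_empty_of_nonpos Y hr, empty_subset]
  · exact prod_mono (ball_subset_ball hrR) (Ioo_subset_Ioo_left (by gcongr))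

theorem volume_box (y : En n) {ρ : ℝ} (hρ : 0 < ρ) (a b : ℝ) :
    volume (box y ρ a b) =
      ENNReal.ofReal (ρ ^ n) * ENNReal.ofReal (b - a) * volume (ball (0 : En n) 1) := by
  rw [box, Measure.volume_eq_prod, Measure.prod_prod, Real.volume_Ioo,
    Measure.addHaar_ball_of_pos _ _ hρ, finrank_euclideanSpace_fin, mul_right_comm]

theorem volume_pcyl (Y : En n × ℝ) (r : ℝ) :
    volume (pcyl Y r) = ENNReal.ofReal r ^ (n + 2) * volume (ball (0 : En n) 1) := by
  rcases le_or_gt r 0 with hr | hr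
  · simp [pcyl_eq_empty_of_nonpos Y hr, ENNReal.ofReal_of_nonpos hr]
  · rw [pcyl, volume_box _ hr, _root_.sub_sub_cancel, ENNReal.ofReal_pow hr.le,
      ENNReal.ofReal_pow hr.le, pow_add]

theorem volume_pcyl_ne_top (Y : En n × ℝ) (r : ℝ) : volume (pcyl Y r) ≠ ⊤ := by
  rw [volume_pcyl]
  finiteness

theorem continuous_volume_pcyl (Y : En n × ℝ) : Continuous fun r => volume (pcyl Y r) := by
  simp_rw [volume_pcyl]
  exact (ENNReal.continuous_mul_const measure_ball_lt_top.ne).comp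
    ((ENNReal.continuous_pow _).comp ENNReal.continuous_ofReal)

theorem tendsto_volume_pcyl_atTop (Y : En n × ℝ) :
    Tendsto (fun r => volume (pcyl Y r)) atTop (𝓝 ⊤) := by
  have hball : volume (ball (0 : En n) 1) ≠ 0 := (measure_ball_pos volume _ one_pos).ne'
  have hpow : Tendsto (fun r : ℝ => ENNReal.ofReal r ^ (n + 2)) atTop (𝓝 ⊤) := by
    simpa only [ENNReal.top_pow (Nat.succ_ne_zero (n + 1))] using
      ENNReal.Tendsto.pow (n := n + 2) ENNReal.tendsto_ofReal_atTop
  simpa only [volume_pcyl, ENNReal.top_mul hball] using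
    ENNReal.Tendsto.mul_const (b := volume (ball (0 : En n) 1)) hpow (Or.inl top_ne_zero)

theorem exists_radius_le_of_volume_pcyl_le {m : ℝ≥0∞} (hm : m ≠ ⊤) :
    ∃ R : ℝ, ∀ (Y : En n × ℝ) (r : ℝ), volume (pcyl Y r) ≤ m → r ≤ R := by
  obtain ⟨R, hR⟩ :=
    ((tendsto_volume_pcyl_atTop (0 : En n × ℝ)).eventually_const_lt hm.lt_top).exists
  refine ⟨R, fun Y r hr => le_of_not_gt fun hRr => hr.not_gt ?_⟩
  calc m < volume (pcyl (0 : En n × ℝ) R) := hR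
    _ ≤ volume (pcyl (0 : En n × ℝ) r) := measure_mono (monotone_pcyl 0 hRr.le)
    _ = volume (pcyl Y r) := by rw [volume_pcyl, volume_pcyl]

theorem volume_inter_box_le_of_forall_pcyl {F : Set (En n × ℝ)} {c : ℝ≥0∞} {ρ : ℝ} (hρ : 0 < ρ)
    (hF : ∀ Y, volume (F ∩ pcyl Y ρ) ≤ c * volume (pcyl Y ρ)) (y : En n) (s : ℝ) (N : ℕ) :
    volume (F ∩ box y ρ s (s + N * ρ ^ 2)) ≤ c * volume (box y ρ s (s + N * ρ ^ 2)) := by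
  let slice (k : ℕ) : Set (En n × ℝ) := ball y ρ ×ˢ Ioc (s + k * ρ ^ 2) (s + (k + 1 : ℕ) * ρ ^ 2)
  let Y (k : ℕ) : En n × ℝ := (y, s + (k + 1 : ℕ) * ρ ^ 2)
  have hslice (k : ℕ) : volume (F ∩ slice k) = volume (F ∩ pcyl (Y k) ρ) := by
    have hbase : (Y k).2 - ρ ^ 2 = s + k * ρ ^ 2 := by simp only [Y]; push_cast; ring
    refine measure_congr (ae_eq_rfl.inter ?_)
    rw [pcyl, box, hbase]
    exact Measure.set_prod_ae_eq ae_eq_rfl Ioo_ae_eq_Ioc.symm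
  have hcover : box y ρ s (s + N * ρ ^ 2) ⊆ ⋃ k ∈ Finset.range N, slice k := by
    have hIoc := Ioc_subset_biUnion_Ioc N fun k : ℕ => s + k * ρ ^ 2
    simp only [Nat.cast_zero, zero_mul, add_zero] at hIoc
    rintro ⟨x, t⟩ ⟨hx, ht⟩
    obtain ⟨k, hk, htk⟩ := mem_iUnion₂.1 (hIoc (Ioo_subset_Ioc_self ht))
    exact mem_iUnion₂.2 ⟨k, hk, hx, htk⟩
  calc volume (F ∩ box y ρ s (s + N * ρ ^ 2))
      ≤ volume (⋃ k ∈ Finset.range N, F ∩ slice k) := by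
        rw [← inter_iUnion₂]
        exact measure_mono (inter_subset_inter_right F hcover)
    _ ≤ ∑ k ∈ Finset.range N, volume (F ∩ slice k) := measure_biUnion_finset_le _ _
    _ ≤ ∑ k ∈ Finset.range N, c * volume (pcyl (Y k) ρ) :=
        Finset.sum_le_sum fun k _ => (hslice k).trans_le (hF (Y k))
    _ = c * volume (box y ρ s (s + N * ρ ^ 2)) := by
        simp_rw [pcyl, volume_box _ hρ, _root_.sub_sub_cancel, add_sub_cancel_left]
        rw [ENNReal.ofReal_mul N.cast_nonneg, ENNReal.ofReal_natCast, Finset.sum_const,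
          Finset.card_range, nsmul_eq_mul]
        ring

theorem ball_eq_box (X : En n × ℝ) (ρ : ℝ) : ball X ρ = box X.1 ρ (X.2 - ρ) (X.2 + ρ) := by
  rw [box, ← Real.ball_eq_Ioo, ball_prod_same]

theorem volume_eq_zero_of_forall_pcyl {F : Set (En n × ℝ)} {c : ℝ≥0∞} (hc : c < 1)
    (hF : ∀ Y r, 0 < r → volume (F ∩ pcyl Y r) ≤ c * volume (pcyl Y r)) : volume F = 0 := by
  have hball (X : En n × ℝ) (N : ℕ) : volume (F ∩ closedBall X (1 / (N + 1 : ℝ))) ≤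
      c * volume (closedBall X (1 / (N + 1 : ℝ))) := by
    have hρ : 0 < 1 / (N + 1 : ℝ) := Nat.one_div_pos_of_nat
    -- The radius is chosen so that the height of the ball is an integer multiple of its square.
    have htop : X.2 + 1 / (N + 1 : ℝ) =
        X.2 - 1 / (N + 1 : ℝ) + (2 * (N + 1) : ℕ) * (1 / (N + 1 : ℝ)) ^ 2 := by
      push_cast
      field_simp
      ring
    have hae := closedBall_ae_eq_ball (volume.prod volume) X (1 / (N + 1 : ℝ))
    rw [← Measure.volume_eq_prod] at hae
    rw [measure_congr hae, measure_congr (ae_eq_rfl.inter hae), ball_eq_box, htop]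
    exact volume_inter_box_le_of_forall_pcyl hρ (hF · _ hρ) _ _ _
  have hradii : Tendsto (fun N : ℕ => 1 / (N + 1 : ℝ)) atTop (𝓝[>] 0) :=
    tendsto_nhdsWithin_iff.2 ⟨tendsto_one_div_add_atTop_nhds_zero_nat,
      .of_forall fun _ => mem_Ioi.2 Nat.one_div_pos_of_nat⟩
  exact measure_eq_zero_of_frequently_inter_closedBall_le hc <|
    .of_forall fun X => hradii.frequently (.of_forall (hball X))

/-- The box swept out by all parabolic cylinders of radius at most `τ * r` that meet `Q_r(Y)`. -/
def pcylEnlarge (τ : ℝ) (Y : En n × ℝ) (r : ℝ) : Set (En n × ℝ) :=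
  box Y.1 ((1 + 2 * τ) * r) (Y.2 - r ^ 2 - (τ * r) ^ 2) (Y.2 + (τ * r) ^ 2)

theorem pcyl_subset_pcylEnlarge {Y Z : En n × ℝ} {r ρ τ : ℝ} (hρ : 0 < ρ) (hle : ρ ≤ τ * r)
    (hmeet : (pcyl Z ρ ∩ pcyl Y r).Nonempty) : pcyl Z ρ ⊆ pcylEnlarge τ Y r := by
  obtain ⟨⟨w, u⟩, ⟨hwZ, huZ, huZ'⟩, ⟨hwY, huY, huY'⟩⟩ := hmeet
  rintro ⟨x, t⟩ ⟨hx, ht, ht'⟩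
  simp only [mem_ball] at *
  have hsq : ρ ^ 2 ≤ (τ * r) ^ 2 := by gcongr
  have hdist : dist x Y.1 < (1 + 2 * τ) * r := by
    linarith [dist_triangle x Z.1 Y.1, dist_triangle_left Z.1 Y.1 w]
  exact ⟨hdist, by linarith, by linarith⟩

theorem volume_pcylEnlarge {τ : ℝ} (hτ : 0 ≤ τ) (Y : En n × ℝ) {r : ℝ} (hr : 0 < r) :
    volume (pcylEnlarge τ Y r) =
      ENNReal.ofReal ((1 + 2 * τ) ^ n * (1 + 2 * τ ^ 2)) * volume (pcyl Y r) := by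
  have hheight : Y.2 + (τ * r) ^ 2 - (Y.2 - r ^ 2 - (τ * r) ^ 2) = (1 + 2 * τ ^ 2) * r ^ 2 := by
    ring
  rw [pcylEnlarge, pcyl, volume_box _ (by positivity), volume_box _ hr, hheight,
    _root_.sub_sub_cancel, mul_pow, ENNReal.ofReal_mul (by positivity),
    ENNReal.ofReal_mul (by positivity), ENNReal.ofReal_mul (by positivity)]
  ring

section VitaliCovering

variable {t : Set ((En n × ℝ) × ℝ)} {R : ℝ}

theorem exists_disjoint_subfamily_pcylEnlarge_covering (hpos : ∀ p ∈ t, 0 < p.2)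
    (hR : ∀ p ∈ t, p.2 ≤ R) {τ : ℝ} (hτ : 1 < τ) :
    ∃ u ⊆ t, u.Countable ∧ u.PairwiseDisjoint (fun p => pcyl p.1 p.2) ∧
      ⋃ p ∈ t, pcyl p.1 p.2 ⊆ ⋃ p ∈ u, pcylEnlarge τ p.1 p.2 := by
  obtain ⟨u, hut, hdisj, hmeet⟩ := Vitali.exists_disjoint_subfamily_covering_enlargement
    (fun p : (En n × ℝ) × ℝ => pcyl p.1 p.2) t Prod.snd τ hτ (fun p hp => (hpos p hp).le) R hR
    (fun p hp => pcyl_nonempty p.1 (hpos p hp))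
  refine ⟨u, hut, hdisj.countable_of_isOpen (fun p _ => isOpen_pcyl p.1 p.2)
    (fun p hp => pcyl_nonempty p.1 (hpos p (hut hp))), hdisj, iUnion₂_subset fun p hp => ?_⟩
  obtain ⟨q, hq, hpq, hle⟩ := hmeet p hp
  exact (pcyl_subset_pcylEnlarge (hpos p hp) hle hpq).trans
    (subset_biUnion_of_mem (u := fun p : (En n × ℝ) × ℝ => pcylEnlarge τ p.1 p.2) hq)

theorem mul_volume_biUnion_pcyl_le_of_one_lt (hpos : ∀ p ∈ t, 0 < p.2) (hR : ∀ p ∈ t, p.2 ≤ R)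
    {A : Set (En n × ℝ)} {c : ℝ≥0∞}
    (hA : ∀ p ∈ t, c * volume (pcyl p.1 p.2) ≤ volume (pcyl p.1 p.2 ∩ A)) {τ : ℝ} (hτ : 1 < τ) :
    c * volume (⋃ p ∈ t, pcyl p.1 p.2) ≤
      ENNReal.ofReal ((1 + 2 * τ) ^ n * (1 + 2 * τ ^ 2)) *
        volume ((⋃ p ∈ t, pcyl p.1 p.2) ∩ A) := by
  obtain ⟨u, hut, hcount, hdisj, hcover⟩ :=
    exists_disjoint_subfamily_pcylEnlarge_covering hpos hR hτ
  have hτ0 : 0 ≤ τ := zero_le_one.trans hτ.le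
  set K := ENNReal.ofReal ((1 + 2 * τ) ^ n * (1 + 2 * τ ^ 2))
  have hsum : ∑' p : u, volume (pcyl p.1.1 p.1.2 ∩ A) =
      volume ((⋃ p ∈ u, pcyl p.1 p.2) ∩ A) := by
    have hmeas (p : (En n × ℝ) × ℝ) : MeasurableSet (pcyl p.1 p.2) := measurableSet_pcyl p.1 p.2
    simp_rw [← Measure.restrict_apply (hmeas _),
      ← Measure.restrict_apply (.biUnion hcount fun p _ => hmeas p)]
    exact (measure_biUnion hcount hdisj fun p _ => hmeas p).symm
  calc c * volume (⋃ p ∈ t, pcyl p.1 p.2)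
      ≤ c * ∑' p : u, volume (pcylEnlarge τ p.1.1 p.1.2) := by
        gcongr
        exact (measure_mono hcover).trans (measure_biUnion_le _ hcount _)
    _ = ∑' p : u, K * (c * volume (pcyl p.1.1 p.1.2)) := by
        rw [← ENNReal.tsum_mul_left]
        refine tsum_congr fun p => ?_
        rw [volume_pcylEnlarge hτ0 _ (hpos p (hut p.2)), mul_left_comm]
    _ ≤ ∑' p : u, K * volume (pcyl p.1.1 p.1.2 ∩ A) := by
        gcongr with p
        exact hA p (hut p.2)
    _ = K * volume ((⋃ p ∈ u, pcyl p.1 p.2) ∩ A) := by rw [ENNReal.tsum_mul_left, hsum]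
    _ ≤ K * volume ((⋃ p ∈ t, pcyl p.1 p.2) ∩ A) := by
        gcongr K * volume (?_ ∩ A)
        exact biUnion_subset_biUnion_left hut

theorem mul_volume_biUnion_pcyl_le (hpos : ∀ p ∈ t, 0 < p.2) (hR : ∀ p ∈ t, p.2 ≤ R)
    {A : Set (En n × ℝ)} {c : ℝ≥0∞}
    (hA : ∀ p ∈ t, c * volume (pcyl p.1 p.2) ≤ volume (pcyl p.1 p.2 ∩ A)) :
    c * volume (⋃ p ∈ t, pcyl p.1 p.2) ≤
      ENNReal.ofReal (3 ^ (n + 1)) * volume ((⋃ p ∈ t, pcyl p.1 p.2) ∩ A) := by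
  have hK : Tendsto (fun τ : ℝ => (1 + 2 * τ) ^ n * (1 + 2 * τ ^ 2)) (𝓝[>] 1)
      (𝓝 (3 ^ (n + 1))) := by
    have hcont : Continuous fun τ : ℝ => (1 + 2 * τ) ^ n * (1 + 2 * τ ^ 2) := by fun_prop
    convert (hcont.tendsto 1).mono_left nhdsWithin_le_nhds using 2
    norm_num [pow_succ]
  refine ge_of_tendsto (ENNReal.Tendsto.mul_const (ENNReal.tendsto_ofReal hK) (Or.inl ?_)) ?_
  · simp
  · filter_upwards [self_mem_nhdsWithin] with τ hτ
    exact mul_volume_biUnion_pcyl_le_of_one_lt hpos hR hA hτ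

end VitaliCovering

section CoverUnion

variable {μ₀ : ℝ} {Γ : Set (En n × ℝ)}

/-- The family `𝒜` of parabolic cylinders `Q_r(Y)`, encoded as pairs `(Y, r)`, in which `Γ` has
relative measure at least `1 - μ₀`. -/
def denseCylinders (μ₀ : ℝ) (Γ : Set (En n × ℝ)) : Set ((En n × ℝ) × ℝ) :=
  {p | 0 < p.2 ∧
    ENNReal.ofReal (1 - μ₀) * volume (pcyl p.1 p.2) ≤ volume (pcyl p.1 p.2 ∩ Γ)}

/-- The parabolic cylinders `Q_r(Y)`, encoded as pairs `(Y, r)`, in which `Γ` has relative measure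
exactly `1 - μ₀`. Every cylinder of `𝒜` is contained in one of these if `|E|` is finite. -/
def criticalCylinders (μ₀ : ℝ) (Γ : Set (En n × ℝ)) : Set ((En n × ℝ) × ℝ) :=
  {p | 0 < p.2 ∧
    ENNReal.ofReal (1 - μ₀) * volume (pcyl p.1 p.2) = volume (pcyl p.1 p.2 ∩ Γ)}

theorem criticalCylinders_subset_denseCylinders (μ₀ : ℝ) (Γ : Set (En n × ℝ)) :
    criticalCylinders μ₀ Γ ⊆ denseCylinders μ₀ Γ :=
  fun _ hp => ⟨hp.1, hp.2.le⟩

theorem coverUnion_eq_biUnion_denseCylinders (μ₀ : ℝ) (Γ : Set (En n × ℝ)) :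
    coverUnion n μ₀ Γ = ⋃ p ∈ denseCylinders μ₀ Γ, pcyl p.1 p.2 := by
  simp only [coverUnion, denseCylinders, mem_ofPred_eq, iUnion_prod']

theorem pcyl_subset_coverUnion {p : (En n × ℝ) × ℝ} (hp : p ∈ denseCylinders μ₀ Γ) :
    pcyl p.1 p.2 ⊆ coverUnion n μ₀ Γ := by
  rw [coverUnion_eq_biUnion_denseCylinders]
  exact subset_biUnion_of_mem (u := fun p : (En n × ℝ) × ℝ => pcyl p.1 p.2) hp

theorem measurableSet_coverUnion (μ₀ : ℝ) (Γ : Set (En n × ℝ)) :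
    MeasurableSet (coverUnion n μ₀ Γ) := by
  rw [coverUnion_eq_biUnion_denseCylinders]
  exact (isOpen_biUnion fun p _ => isOpen_pcyl p.1 p.2).measurableSet

theorem coverUnion_toMeasurable (μ₀ : ℝ) (Γ : Set (En n × ℝ)) :
    coverUnion n μ₀ (toMeasurable volume Γ) = coverUnion n μ₀ Γ := by
  simp only [coverUnion, inter_comm (pcyl _ _),
    Measure.measure_toMeasurable_inter_of_sFinite (measurableSet_pcyl _ _)]

theorem volume_sdiff_coverUnion_eq_zero (hμ₀ : 0 < μ₀) (Γ : Set (En n × ℝ)) :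
    volume (Γ \ coverUnion n μ₀ Γ) = 0 := by
  have hc : ENNReal.ofReal (1 - μ₀) < 1 := by
    rw [ENNReal.ofReal_lt_one]
    linarith
  refine volume_eq_zero_of_forall_pcyl hc fun Y r hr => ?_
  by_cases h : (Y, r) ∈ denseCylinders μ₀ Γ
  · have hsub : pcyl Y r ⊆ coverUnion n μ₀ Γ := pcyl_subset_coverUnion (p := (Y, r)) h
    have hdisj : Disjoint (Γ \ coverUnion n μ₀ Γ) (pcyl Y r) :=
      disjoint_sdiff_left.mono_right hsub
    simp only [hdisj.inter_eq, measure_empty, zero_le]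
  · calc volume ((Γ \ coverUnion n μ₀ Γ) ∩ pcyl Y r)
        ≤ volume (pcyl Y r ∩ Γ) := by
          rw [inter_comm]
          exact measure_mono (inter_subset_inter_right _ sdiff_subset)
      _ ≤ ENNReal.ofReal (1 - μ₀) * volume (pcyl Y r) :=
          le_of_not_ge fun hle => h ⟨hr, hle⟩

theorem volume_le_volume_coverUnion (hμ₀ : 0 < μ₀) (Γ : Set (En n × ℝ)) :
    volume Γ ≤ volume (coverUnion n μ₀ Γ) :=
  measure_mono_ae (ae_le_set.2 (volume_sdiff_coverUnion_eq_zero hμ₀ Γ))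

theorem exists_radius_le_of_mem_denseCylinders (hE : volume (coverUnion n μ₀ Γ) ≠ ⊤) :
    ∃ R : ℝ, ∀ p ∈ denseCylinders μ₀ Γ, p.2 ≤ R := by
  obtain ⟨R, hR⟩ := exists_radius_le_of_volume_pcyl_le (n := n) hE
  exact ⟨R, fun p hp => hR p.1 p.2 (measure_mono (pcyl_subset_coverUnion hp))⟩

theorem lt_one_of_volume_coverUnion_ne_top (hE : volume (coverUnion n μ₀ Γ) ≠ ⊤) : μ₀ < 1 := by
  obtain ⟨R, hR⟩ := exists_radius_le_of_mem_denseCylinders hE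
  by_contra! hμ₀
  have hdense : ((0 : En n × ℝ), max 1 (R + 1)) ∈ denseCylinders μ₀ Γ := by
    refine ⟨by positivity, ?_⟩
    rw [ENNReal.ofReal_of_nonpos (sub_nonpos.2 hμ₀), zero_mul]
    exact zero_le
  linarith [hR _ hdense, le_max_right 1 (R + 1)]

theorem exists_mem_criticalCylinders_of_mem_denseCylinders
    (hE : volume (coverUnion n μ₀ Γ) ≠ ⊤) {Y : En n × ℝ} {r : ℝ}
    (h : (Y, r) ∈ denseCylinders μ₀ Γ) : ∃ ρ, r ≤ ρ ∧ (Y, ρ) ∈ criticalCylinders μ₀ Γ := by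
  obtain ⟨R, hR⟩ := exists_radius_le_of_mem_denseCylinders hE
  have hlarge : volume (pcyl Y (max r (R + 1)) ∩ Γ) ≤
      ENNReal.ofReal (1 - μ₀) * volume (pcyl Y (max r (R + 1))) := by
    refine le_of_not_ge fun hle => ?_
    linarith [hR (Y, max r (R + 1)) ⟨lt_max_of_lt_left h.1, hle⟩, le_max_right r (R + 1)]
  have hcont := continuous_volume_pcyl Y
  have hcontΓ := continuous_measure_inter_of_monotone (monotone_pcyl Y) (measurableSet_pcyl Y)
    (volume_pcyl_ne_top Y) hcont Γ
  obtain ⟨ρ, hρ, heq⟩ := isPreconnected_Ici.intermediate_value₂ self_mem_Ici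
    (mem_Ici.2 (le_max_left r (R + 1)))
    ((ENNReal.continuous_const_mul ofReal_ne_top).comp hcont).continuousOn
    hcontΓ.continuousOn h.2 hlarge
  exact ⟨ρ, hρ, h.1.trans_le hρ, heq⟩

theorem coverUnion_eq_biUnion_criticalCylinders (hE : volume (coverUnion n μ₀ Γ) ≠ ⊤) :
    coverUnion n μ₀ Γ = ⋃ p ∈ criticalCylinders μ₀ Γ, pcyl p.1 p.2 := by
  rw [coverUnion_eq_biUnion_denseCylinders]
  refine Subset.antisymm (iUnion₂_subset fun p hp => ?_)
    (biUnion_subset_biUnion_left (criticalCylinders_subset_denseCylinders μ₀ Γ))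
  obtain ⟨ρ, hrρ, hρ⟩ := exists_mem_criticalCylinders_of_mem_denseCylinders hE hp
  exact (monotone_pcyl p.1 hrρ).trans
    (subset_biUnion_of_mem (u := fun p : (En n × ℝ) × ℝ => pcyl p.1 p.2) hρ)

theorem mul_volume_pcyl_le_of_mem_criticalCylinders (hμ₀ : μ₀ ≤ 1) {p : (En n × ℝ) × ℝ}
    (hp : p ∈ criticalCylinders μ₀ Γ) :
    ENNReal.ofReal μ₀ * volume (pcyl p.1 p.2) ≤ volume (pcyl p.1 p.2 ∩ Γᶜ) := by
  have hμ₀_eq : ENNReal.ofReal μ₀ = 1 - ENNReal.ofReal (1 - μ₀) := by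
    rw [← ENNReal.ofReal_one, ← ENNReal.ofReal_sub _ (sub_nonneg.2 hμ₀), _root_.sub_sub_cancel]
  rw [hμ₀_eq, ENNReal.sub_mul fun _ _ => volume_pcyl_ne_top p.1 p.2, one_mul, hp.2,
    tsub_le_iff_left, ← sdiff_eq]
  exact measure_le_inter_add_sdiff _ _ _

theorem mul_volume_coverUnion_le (hE : volume (coverUnion n μ₀ Γ) ≠ ⊤) :
    ENNReal.ofReal μ₀ * volume (coverUnion n μ₀ Γ) ≤
      ENNReal.ofReal (3 ^ (n + 1)) * volume (coverUnion n μ₀ Γ \ Γ) := by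
  obtain ⟨R, hR⟩ := exists_radius_le_of_mem_denseCylinders hE
  have hμ₀ := (lt_one_of_volume_coverUnion_ne_top hE).le
  rw [sdiff_eq, coverUnion_eq_biUnion_criticalCylinders hE]
  exact mul_volume_biUnion_pcyl_le (fun p hp => hp.1)
    (fun p hp => hR p (criticalCylinders_subset_denseCylinders μ₀ Γ hp))
    (fun p hp => mul_volume_pcyl_le_of_mem_criticalCylinders hμ₀ hp)

theorem mul_volume_le_volume_coverUnion_of_measurableSet (hμ₀ : 0 < μ₀) (hΓ : MeasurableSet Γ) :
    ENNReal.ofReal (1 + μ₀ / 3 ^ (n + 1)) * volume Γ ≤ volume (coverUnion n μ₀ Γ) := by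
  rcases eq_or_ne (volume (coverUnion n μ₀ Γ)) ⊤ with hE | hE
  · exact hE ▸ le_top
  have hinter : volume Γ = volume (coverUnion n μ₀ Γ ∩ Γ) := by
    rw [← measure_inter_add_sdiff Γ (measurableSet_coverUnion μ₀ Γ),
      volume_sdiff_coverUnion_eq_zero hμ₀ Γ, add_zero, inter_comm]
  have hsdiff : ENNReal.ofReal (μ₀ / 3 ^ (n + 1)) * volume Γ ≤ volume (coverUnion n μ₀ Γ \ Γ) := by
    rw [ENNReal.ofReal_div_of_pos (by positivity), ← ENNReal.mul_div_right_comm]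
    refine ENNReal.div_le_of_le_mul' (le_trans ?_ (mul_volume_coverUnion_le hE))
    gcongr ENNReal.ofReal μ₀ * ?_
    exact volume_le_volume_coverUnion hμ₀ Γ
  calc ENNReal.ofReal (1 + μ₀ / 3 ^ (n + 1)) * volume Γ
      = volume Γ + ENNReal.ofReal (μ₀ / 3 ^ (n + 1)) * volume Γ := by
        rw [ENNReal.ofReal_add zero_le_one (by positivity), ENNReal.ofReal_one, add_mul, one_mul]
    _ ≤ volume (coverUnion n μ₀ Γ ∩ Γ) + volume (coverUnion n μ₀ Γ \ Γ) :=
        add_le_add hinter.le hsdiff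
    _ = volume (coverUnion n μ₀ Γ) := measure_inter_add_sdiff _ hΓ

end CoverUnion

theorem parabolic_covering_lemma_general (n : ℕ) {μ₀ : ℝ} (hμ₀ : 0 < μ₀) (Γ : Set (En n × ℝ)) :
    volume (Γ \ coverUnion n μ₀ Γ) = 0 ∧
      ENNReal.ofReal (1 + μ₀ / 3 ^ (n + 1)) * volume Γ ≤ volume (coverUnion n μ₀ Γ) := by
  refine ⟨volume_sdiff_coverUnion_eq_zero hμ₀ Γ, ?_⟩
  have hhull := mul_volume_le_volume_coverUnion_of_measurableSet hμ₀
    (measurableSet_toMeasurable volume Γ)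
  rwa [measure_toMeasurable, coverUnion_toMeasurable] at hhull

/-- **Parabolic covering lemma** (Lemma 5.1). -/
theorem parabolic_covering_lemma
    (n : ℕ) (hn : 0 < n) (μ₀ : ℝ) (hμ₀ : μ₀ ∈ Set.Ioo (0 : ℝ) 1)
    (Γ : Set (En n × ℝ)) (hΓmeas : MeasurableSet Γ) (hΓfin : volume Γ < ⊤) :
    volume (Γ \ coverUnion n μ₀ Γ) = 0 ∧
      ENNReal.ofReal (1 + μ₀ / 3 ^ (n + 1)) * volume Γ ≤ volume (coverUnion n μ₀ Γ) :=
  parabolic_covering_lemma_general n hμ₀.1 Γ
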